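/- Let I ⊆ k[x_1,...,x_n] be an ideal over an algebraically closed field k, and let V = Z(I) be its zero set. Then V has dimension r if and only if: (a) there exists a subset U ⊆ {1,...,n} of size r such that the elimination ideal I ∩ k[x_i : i ∈ U] is the zero ideal, and (b) for every subset U' ⊆ {1,...,n} of size r+1, the elimination ideal I ∩ k[x_i : i ∈ U'] is nonzero. -/

import Mathlib

open MvPolynomial in
/-- Dimension and transcendence degree of an affine domain agree. -/
theorem dimElim_core {k : Type*} [Field k] {n : ℕ}
    (P : Ideal (MvPolynomial (Fin n) k)) [P.IsPrime] :
    ∃ s : ℕ, ringKrullDim (MvPolynomial (Fin n) k ⧸ P) = (s : WithBot (ℕ∞)) ∧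
      Algebra.trdeg k (MvPolynomial (Fin n) k ⧸ P) = s := by
  obtain ⟨s, -, g, hinj, hint⟩ :=
    exists_integral_inj_algHom_of_quotient P (Ideal.IsPrime.ne_top ‹_›)
  let alg := g.toRingHom.toAlgebra
  have hinj' : Function.Injective
    (algebraMap (MvPolynomial (Fin s) k) (MvPolynomial (Fin n) k ⧸ P)) := hinj
  have hi : Algebra.IsIntegral (MvPolynomial (Fin s) k) (MvPolynomial (Fin n) k ⧸ P) := ⟨hint⟩
  have hs : ringKrullDim (MvPolynomial (Fin s) k) = (s : WithBot ℕ∞) := by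
    rw [MvPolynomial.ringKrullDim_of_isNoetherianRing]
    simp
  refine ⟨s, ?_, ?_⟩
  · rw [← hs]
    apply le_antisymm
    · refine Order.krullDim_le_of_strictMono
        (PrimeSpectrum.comap (algebraMap (MvPolynomial (Fin s) k) (MvPolynomial (Fin n) k ⧸ P))) ?_
      intro a b hab
      exact Ideal.IsIntegral.comap_lt_comap (R := MvPolynomial (Fin s) k)
        (I := a.asIdeal) (J := b.asIdeal) hab
    · rw [hs]
      obtain ⟨l, hl⟩ := Order.le_krullDim_iff.mp hs.ge
      obtain ⟨Q, hQ, hQl⟩ := Ideal.exists_ideal_over_prime_of_isIntegral_of_isDomain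
        (S := MvPolynomial (Fin n) k ⧸ P) l.head.asIdeal (by
          rw [(RingHom.injective_iff_ker_eq_bot _).1 hinj']
          exact bot_le)
      have : Q.LiesOver l.head.asIdeal := ⟨hQl.symm⟩
      obtain ⟨L, hL, -⟩ := Ideal.exists_ltSeries_of_hasGoingUp l Q
      exact Order.le_krullDim_iff.mpr ⟨L, hL.trans hl⟩
  · have : IsScalarTower k (MvPolynomial (Fin s) k) (MvPolynomial (Fin n) k ⧸ P) :=
      IsScalarTower.of_algebraMap_eq fun x => (g.commutes x).symm
    have : FaithfulSMul (MvPolynomial (Fin s) k) (MvPolynomial (Fin n) k ⧸ P) :=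
      (faithfulSMul_iff_algebraMap_injective _ _).2 hinj'
    have h := _root_.trdeg_add_eq k (MvPolynomial (Fin s) k)
      (A := MvPolynomial (Fin n) k ⧸ P)
    rw [_root_.trdeg_eq_zero (R := MvPolynomial (Fin s) k), MvPolynomial.trdeg_of_isDomain] at h
    simpa using h.symm

theorem dimElim_indep_iff {k : Type*} [Field k] {n : ℕ}
    (P : Ideal (MvPolynomial (Fin n) k)) (U : Set (Fin n)) :
    AlgebraicIndependent k
      ((fun i => Ideal.Quotient.mk P (MvPolynomial.X i)) ∘ ((↑) : U → Fin n)) ↔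
    ∀ f ∈ P, (f.vars : Set (Fin n)) ⊆ U → f = 0 := by
  rw [algebraicIndependent_comp_subtype]
  have : ∀ p : MvPolynomial (Fin n) k,
      MvPolynomial.aeval (fun i => Ideal.Quotient.mk P (MvPolynomial.X i)) p
        = Ideal.Quotient.mk P p := by
    intro p
    have h : (MvPolynomial.aeval (fun i => Ideal.Quotient.mk P (MvPolynomial.X i)))
        = Ideal.Quotient.mkₐ k P := by
      ext i; simp
    rw [h]; rfl
  simp only [this, MvPolynomial.mem_supported, Ideal.Quotient.eq_zero_iff_mem]
  exact ⟨fun h f h1 h2 => h f h2 h1, fun h f h1 h2 => h f h2 h1⟩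

theorem dimElim_A {k : Type*} [Field k] {n : ℕ}
    (I : Ideal (MvPolynomial (Fin n) k)) (U : Finset (Fin n))
    (hU : ∀ f ∈ I, (f.vars : Set (Fin n)) ⊆ (U : Set (Fin n)) → f = 0) :
    (U.card : WithBot (ℕ∞)) ≤ ringKrullDim (MvPolynomial (Fin n) k ⧸ I) := by
  let S : Submonoid (MvPolynomial (Fin n) k) :=
    (nonZeroDivisors _) ⊓ (MvPolynomial.supported k (U : Set (Fin n))).toSubmonoid
  have hS : ∀ f, f ∈ S ↔ f ≠ 0 ∧ (f.vars : Set (Fin n)) ⊆ (U : Set (Fin n)) := by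
    intro f
    rw [← MvPolynomial.mem_supported (R := k), ← mem_nonZeroDivisors_iff_ne_zero]
    rfl
  obtain ⟨P, hP, hIP, hd⟩ := Ideal.exists_le_prime_disjoint (I := I) S (by
    rw [Set.disjoint_left]
    intro f hf hfS
    exact ((hS f).1 hfS).1 (hU f hf ((hS f).1 hfS).2))
  obtain ⟨s, h1, h2⟩ := dimElim_core P
  have hind := (dimElim_indep_iff P (U : Set (Fin n))).2 (fun f hf hv => by
    by_contra h0
    exact Set.disjoint_left.1 hd hf ((hS f).2 ⟨h0, hv⟩))
  have hle := hind.lift_cardinalMk_le_trdeg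
  rw [h2] at hle
  have hle' : U.card ≤ s := by simpa using hle
  calc (U.card : WithBot (ℕ∞)) ≤ s := by exact_mod_cast hle'
    _ = ringKrullDim (MvPolynomial (Fin n) k ⧸ P) := h1.symm
    _ ≤ _ := ringKrullDim_le_of_surjective (Ideal.Quotient.factor hIP)
      (Ideal.Quotient.factor_surjective hIP)

theorem dimElim_B {k : Type*} [Field k] {n : ℕ}
    (I : Ideal (MvPolynomial (Fin n) k)) (r : ℕ)
    (hr : (r : WithBot (ℕ∞)) ≤ ringKrullDim (MvPolynomial (Fin n) k ⧸ I)) :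
    ∃ U : Finset (Fin n), U.card = r ∧
      ∀ f ∈ I, (f.vars : Set (Fin n)) ⊆ (U : Set (Fin n)) → f = 0 := by
  rw [ringKrullDim_quotient] at hr
  obtain ⟨l, hl⟩ := Order.le_krullDim_iff.mp hr
  let P : Ideal (MvPolynomial (Fin n) k) := l.head.1.asIdeal
  have hIP : I ≤ P := l.head.2
  have hP : (r : WithBot (ℕ∞)) ≤ ringKrullDim (MvPolynomial (Fin n) k ⧸ P) := by
    rw [ringKrullDim_quotient]
    refine Order.le_krullDim_iff.mpr ⟨⟨l.length, fun i => ⟨(l i).1, ?_⟩, fun i => ?_⟩, hl⟩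
    · exact l.head_le i
    · exact l.step i
  obtain ⟨s, h1, h2⟩ := dimElim_core P
  rw [h1] at hP
  have hrs : r ≤ s := by exact_mod_cast hP
  let x : Fin n → MvPolynomial (Fin n) k ⧸ P := fun i => Ideal.Quotient.mk P (MvPolynomial.X i)
  have hadj : Algebra.adjoin k (Set.range x) = ⊤ := by
    have h : (MvPolynomial.aeval x) = Ideal.Quotient.mkₐ k P := by
      ext i; simp [x]
    rw [Algebra.adjoin_range_eq_range_aeval, h, AlgHom.range_eq_top]
    exact Ideal.Quotient.mkₐ_surjective k P
  have : Algebra.IsAlgebraic (Algebra.adjoin k (Set.range x)) (MvPolynomial (Fin n) k ⧸ P) := by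
    rw [hadj]
    exact ⟨fun b => isAlgebraic_algebraMap (⟨b, trivial⟩ : (⊤ : Subalgebra k _))⟩
  obtain ⟨t, htx, ht⟩ := exists_isTranscendenceBasis_subset (R := k) (Set.range x)
  have htc : Cardinal.mk t = s := ht.cardinalMk_eq_trdeg.trans h2
  choose c hc using fun y : t => htx y.2
  have hcinj : Function.Injective c := fun a b hab => Subtype.ext (by rw [← hc a, ← hc b, hab])
  have : Finite t := Finite.of_injective c hcinj
  have := Fintype.ofFinite t
  have hcard : (Finset.univ.map ⟨c, hcinj⟩ : Finset (Fin n)).card = s := by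
    rw [Finset.card_map, Finset.card_univ]
    rw [Cardinal.mk_fintype] at htc
    exact_mod_cast htc
  obtain ⟨U, hU, hUr⟩ := Finset.exists_subset_card_eq (hrs.trans hcard.ge)
  refine ⟨U, hUr, fun f hf hv => ?_⟩
  refine (dimElim_indep_iff P (U : Set (Fin n))).1 ?_ f (hIP hf) hv
  have hmem : ∀ i : (U : Set (Fin n)), ∃ y : t, c y = i.1 := by
    intro i
    have := hU i.2
    simpa using this
  choose d hd using hmem
  have hdinj : Function.Injective d := fun a b hab => Subtype.ext (by rw [← hd a, ← hd b, hab])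
  have := ht.1.comp d hdinj
  convert this using 1
  funext i
  simp only [Function.comp]
  rw [← hc (d i), hd i]

/-- Characterisation of the dimension of a zero set via elimination ideals: over an
algebraically closed field `k`, the zero set of an ideal `I ⊆ k[x_1, …, x_n]` has
dimension `r` (i.e. the Krull dimension of `k[x]/√I` is `r`) if and only if (a) there is
a set `U` of `r` variables such that the elimination ideal `I ∩ k[x_i : i ∈ U]` is zero,
and (b) for every set `U'` of `r + 1` variables the elimination ideal
`I ∩ k[x_i : i ∈ U']` is nonzero. -/
theorem dim_iff_elimination {k : Type*} [Field k] [IsAlgClosed k] {n : ℕ}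
    (I : Ideal (MvPolynomial (Fin n) k)) (r : ℕ) :
    ringKrullDim (MvPolynomial (Fin n) k ⧸ I.radical) = (r : WithBot (WithTop ℕ)) ↔
      ((∃ U : Finset (Fin n), U.card = r ∧
          ∀ f ∈ I, (f.vars : Set (Fin n)) ⊆ (U : Set (Fin n)) → f = 0) ∧
        (∀ U' : Finset (Fin n), U'.card = r + 1 →
          ∃ f ∈ I, (f.vars : Set (Fin n)) ⊆ (U' : Set (Fin n)) ∧ f ≠ 0)) := by
  change _ = (r : WithBot ℕ∞) ↔ _
  have hrad : ringKrullDim (MvPolynomial (Fin n) k ⧸ I.radical)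
      = ringKrullDim (MvPolynomial (Fin n) k ⧸ I) := by
    rw [ringKrullDim_quotient, ringKrullDim_quotient, PrimeSpectrum.zeroLocus_radical]
  rw [hrad]
  constructor
  · intro h
    refine ⟨dimElim_B I r h.ge, fun U' hU' => ?_⟩
    by_contra hcon
    push Not at hcon
    have := dimElim_A I U' hcon
    rw [h, hU'] at this
    have : r + 1 ≤ r := by exact_mod_cast this
    omega
  · rintro ⟨⟨U, hU, hUI⟩, h2⟩
    have h1 := dimElim_A I U hUI
    rw [hU] at h1
    refine le_antisymm ?_ h1
    by_contra hcon
    rw [not_le] at hcon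
    have h3 : ((r + 1 : ℕ) : WithBot (ℕ∞)) ≤ ringKrullDim (MvPolynomial (Fin n) k ⧸ I) := by
      push_cast
      exact ENat.WithBot.add_one_le_iff.2 hcon
    obtain ⟨U', hU', hI⟩ := dimElim_B I (r + 1) h3
    obtain ⟨f, hf, hv, h0⟩ := h2 U' hU'
    exact h0 (hI f hf hv)
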